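/- Discrete equi-integrability of gradients in the critical case (Step 2 of the proof of Lemma 3.6 of the paper): assume Assumption H with β = 1/(p−1). There exists a set Ω₀ ∈ ℱ with ℙ(Ω₀) = 1 such that for every ω ∈ Ω₀, every half-open axis-parallel box A ⊂ ℝ^d and every family (u_ε)_{ε>0} of functions u_ε : εℤ^d → ℝⁿ with limsup_{ε↓0} E_ε(ω;u_ε,A) < ∞, one has lim_{k→∞} limsup_{ε↓0} ε^d Σ_{z∈εℤ^d∩A} Σ_{b∈𝒩₀, |∂_b^ε u_ε(z)| ≥ k} |∂_b^ε u_ε(z)| = 0. -/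

import Mathlib

open MeasureTheory Filter Metric Set
open scoped Classical
open scoped ENNReal Topology Pointwise

noncomputable section

namespace StochHom

/-- `ℝ^d` with the Euclidean norm. -/
abbrev Rd (d : ℕ) : Type := EuclideanSpace ℝ (Fin d)

/-- `ℝ^n` with the Euclidean norm. -/
abbrev Rn (n : ℕ) : Type := EuclideanSpace ℝ (Fin n)

/-- The lattice `ℤ^d`. -/
abbrev Zd (d : ℕ) : Type := Fin d → ℤ

variable {d n : ℕ}

/-- The embedding of the lattice `ℤ^d` into `ℝ^d`. -/
def toRd (z : Zd d) : Rd d := (EuclideanSpace.equiv (Fin d) ℝ).symm fun i => (z i : ℝ)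

/-- The standard basis vectors `eᵢ` of `ℤ^d`. -/
def stdb (i : Fin d) : Zd d := fun j => if j = i then 1 else 0

/-- The interaction range `R = max {4√d, max_{b ∈ ℰ₀} |b|}`. -/
def irange (d : ℕ) (E0 : Finset (Zd d)) : ℝ :=
  max (4 * Real.sqrt d) (sSup ((fun b : Zd d => ‖toRd b‖) '' (E0 : Set (Zd d))))

variable {Ω : Type*} [MeasurableSpace Ω]

/-- The energy `E₁(ω; u, ℤ^d ∩ A)`. -/
def energy1 (τ : Zd d → Ω → Ω) (E0 : Finset (Zd d)) (V : Zd d → Ω → Rn n → ℝ)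
    (ω : Ω) (u : Zd d → Rn n) (A : Set (Rd d)) : ℝ :=
  ∑' z : Zd d, if toRd z ∈ A then
      ∑ b ∈ E0, V b (τ z ω) ((‖toRd b‖)⁻¹ • (u (z + b) - u z)) else 0

/-- The scaled energy `E_ε(ω; u, A)`, where a function `u : εℤ^d → ℝ^n` is identified with a
function on `ℤ^d` via `z ↦ u(εz)`, so that `∂_b^ε u (z) = (u (z+b) - u z)/(ε |b|)`. -/
def energyE (τ : Zd d → Ω → Ω) (E0 : Finset (Zd d)) (V : Zd d → Ω → Rn n → ℝ)
    (ε : ℝ) (ω : Ω) (u : Zd d → Rn n) (A : Set (Rd d)) : ℝ :=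
  ε ^ d * ∑' z : Zd d, if ε • toRd z ∈ A then
      ∑ b ∈ E0, V b (τ z ω) ((ε * ‖toRd b‖)⁻¹ • (u (z + b) - u z)) else 0

/-- The localized minimal energy `m_F(ω; A)`. -/
def mF (τ : Zd d → Ω → Ω) (E0 : Finset (Zd d)) (V : Zd d → Ω → Rn n → ℝ)
    (ω : Ω) (F : Rd d →L[ℝ] Rn n) (A : Set (Rd d)) : ℝ :=
  ⨅ φ : {φ : Zd d → Rn n // ∀ z : Zd d, infDist (toRd z) Aᶜ ≤ irange d E0 → φ z = 0},
    energy1 τ E0 V ω (fun z => F (toRd z) + φ.1 z) A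

/-- The half-open cube `[0,k)^d ⊂ ℝ^d`. -/
def cube (d k : ℕ) : Set (Rd d) := {x | ∀ i, 0 ≤ x i ∧ x i < (k : ℝ)}

/-- The homogenized energy density `W₀(F) = inf_{k ≥ 1} k⁻ᵈ E[m_F(·, [0,k)^d)]`. -/
def W0 (P : Measure Ω) (τ : Zd d → Ω → Ω) (E0 : Finset (Zd d))
    (V : Zd d → Ω → Rn n → ℝ) (F : Rd d →L[ℝ] Rn n) : ℝ :=
  ⨅ k : {k : ℕ // 0 < k}, (((k : ℕ) : ℝ) ^ d)⁻¹ * ∫ ω, mF τ E0 V ω F (cube d k) ∂P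

/-- Half-open axis-parallel box `Π_i [aᵢ, bᵢ)`. -/
def halfBox (a b : Fin d → ℝ) : Set (Rd d) := {x | ∀ i, a i ≤ x i ∧ x i < b i}

/-- Open axis-parallel box `Π_i (aᵢ, bᵢ)`. -/
def openBox (a b : Fin d → ℝ) : Set (Rd d) := {x | ∀ i, a i < x i ∧ x i < b i}

/-- Closed axis-parallel box `Π_i [aᵢ, bᵢ]`. -/
def closedBox (a b : Fin d → ℝ) : Set (Rd d) := {x | ∀ i, a i ≤ x i ∧ x i ≤ b i}

/-- Half-open axis-parallel box with integer corners. -/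
def intBox (a b : Zd d) : Set (Rd d) := {x | ∀ i, (a i : ℝ) ≤ x i ∧ x i < (b i : ℝ)}

/-- The periodic cell minimization `W^{(k)}(ω; F)`. -/
def Wper (τ : Zd d → Ω → Ω) (E0 : Finset (Zd d)) (V : Zd d → Ω → Rn n → ℝ)
    (k : ℕ) (ω : Ω) (F : Rd d →L[ℝ] Rn n) : ℝ :=
  ⨅ φ : {φ : Zd d → Rn n // ∀ z z' : Zd d, φ (z + k • z') = φ z},
    ((k : ℝ) ^ d)⁻¹ * energy1 τ E0 V ω (fun z => F (toRd z) + φ.1 z) (cube d k)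

/-!
A slope `r ≥ k` on an edge with weight `l` and energy `v` satisfies either `r ≤ η l r ^ p`, and is
then absorbed by `2 c₁ η v`, or `r < (η l) ^ (-1/(p-1))`, and then the weight `l ^ (-1/(p-1))`
exceeds the level `k η ^ (1/(p-1))`. Since `λ ^ (-1/(p-1))` is integrable, its part above a high
level `M` has small integral, and Wiener's maximal inequality (a Vitali covering argument on `ℤ^d`,
transferred to `Ω` along orbits) makes the averages of that part over all cubes around the origin
almost surely small at once. It remains to choose first `η`, then `M`, then `k`.
-/

/-- The sup-norm ball of radius `N` around `x` in `ℤ^d`, a cube with `(2N+1)^d` points. Averages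
over such cubes make up the maximal function. -/
def latticeCube (x : Zd d) (N : ℕ) : Finset (Zd d) := Finset.Icc (x - N) (x + N)

lemma coe_latticeCube (x : Zd d) (N : ℕ) : (latticeCube x N : Set (Zd d)) = closedBall x N := by
  simp only [latticeCube, Finset.coe_Icc, closedBall_pi x N.cast_nonneg, Int.closedBall_eq_Icc,
    pi_univ_Icc]
  congr <;> ext i <;> simp

lemma mem_latticeCube {x y : Zd d} {N : ℕ} : y ∈ latticeCube x N ↔ dist y x ≤ N := by
  rw [← Finset.mem_coe, coe_latticeCube, mem_closedBall]

lemma card_latticeCube (x : Zd d) (N : ℕ) : (latticeCube x N).card = (2 * N + 1) ^ d := by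
  have hside (i : Fin d) : (x i + N + 1 - (x i - N)).toNat = 2 * N + 1 := by omega
  simp [latticeCube, Pi.card_Icc, Int.card_Icc, hside]

lemma card_latticeCube_pos (x : Zd d) (N : ℕ) : 0 < (latticeCube x N).card := by
  rw [card_latticeCube]
  positivity

lemma card_latticeCube_mul_le {c : ℕ} (hc : 0 < c) (x y : Zd d) (N : ℕ) :
    (latticeCube x (c * N)).card ≤ c ^ d * (latticeCube y N).card := by
  rw [card_latticeCube, card_latticeCube, ← mul_pow]
  exact Nat.pow_le_pow_left (by linarith) d

lemma sum_latticeCube_zero_add {M : Type*} [AddCommMonoid M] (F : Zd d → M) (x : Zd d) (N : ℕ) :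
    ∑ y ∈ latticeCube 0 N, F (y + x) = ∑ y ∈ latticeCube x N, F y := by
  have hmap : (latticeCube 0 N).map (addRightEmbedding x) = latticeCube x N := by
    rw [latticeCube, latticeCube, Finset.map_add_right_Icc, zero_sub, neg_add_eq_sub, zero_add,
      add_comm]
  simp [← hmap]

lemma exists_disjoint_latticeCube_card_le (S : Finset (Zd d)) (r : Zd d → ℕ) :
    ∃ U ⊆ S, (U : Set (Zd d)).PairwiseDisjoint (fun x ↦ latticeCube x (r x)) ∧
      S.card ≤ 4 ^ d * ∑ x ∈ U, (latticeCube x (r x)).card := by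
  obtain ⟨u, huS, hdisj, hcover⟩ :=
    Vitali.exists_disjoint_subfamily_covering_enlargement_closedBall (S : Set (Zd d)) id
      (fun x ↦ (r x : ℝ)) (S.sup r : ℕ) (fun x hx ↦ mod_cast Finset.le_sup hx) 4 (by norm_num)
  lift u to Finset (Zd d) using S.finite_toSet.subset huS
  refine ⟨u, mod_cast huS, fun x hx y hy hxy ↦ ?_, ?_⟩
  · simpa [Function.onFun, ← coe_latticeCube] using hdisj hx hy hxy
  have hsub : S ⊆ u.biUnion fun x ↦ latticeCube x (4 * r x) := fun a ha ↦ by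
    obtain ⟨b, hb, hab⟩ := hcover a ha
    refine Finset.mem_biUnion.2 ⟨b, hb, mem_latticeCube.2 ?_⟩
    simpa using hab (mem_closedBall_self (r a).cast_nonneg)
  calc S.card ≤ ∑ x ∈ u, (latticeCube x (4 * r x)).card :=
        (Finset.card_le_card hsub).trans Finset.card_biUnion_le
    _ ≤ ∑ x ∈ u, 4 ^ d * (latticeCube x (r x)).card :=
        Finset.sum_le_sum fun x _ ↦ card_latticeCube_mul_le (by norm_num) x x (r x)
    _ = 4 ^ d * ∑ x ∈ u, (latticeCube x (r x)).card := (Finset.mul_sum _ _ _).symm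

lemma mul_card_le_of_forall_mul_card_le_sum {S T : Finset (Zd d)} {r : Zd d → ℕ}
    (hT : ∀ x ∈ S, latticeCube x (r x) ⊆ T) {F : Zd d → ℝ≥0∞} {t : ℝ≥0∞}
    (hF : ∀ x ∈ S, t * (latticeCube x (r x)).card ≤ ∑ y ∈ latticeCube x (r x), F y) :
    t * S.card ≤ 4 ^ d * ∑ y ∈ T, F y := by
  obtain ⟨U, hUS, hdisj, hcard⟩ := exists_disjoint_latticeCube_card_le S r
  calc t * S.card
      ≤ t * ((4 ^ d * ∑ x ∈ U, (latticeCube x (r x)).card : ℕ) : ℝ≥0∞) := by gcongr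
    _ = 4 ^ d * ∑ x ∈ U, t * (latticeCube x (r x)).card := by
        push_cast
        rw [mul_left_comm, Finset.mul_sum]
    _ ≤ 4 ^ d * ∑ x ∈ U, ∑ y ∈ latticeCube x (r x), F y := by
        gcongr with x hx
        exact hF x (hUS hx)
    _ = 4 ^ d * ∑ y ∈ U.biUnion fun x ↦ latticeCube x (r x), F y := by
        rw [Finset.sum_biUnion hdisj]
    _ ≤ 4 ^ d * ∑ y ∈ T, F y := by
        gcongr
        exact Finset.biUnion_subset.2 fun x hx ↦ hT x (hUS hx)

/-- The average of `f` over the part of the orbit of `ω` indexed by the cube of radius `N` around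
the origin; its supremum over `N` is the maximal function of the action `τ`. -/
def cubeAverage {X : Type*} (τ : Zd d → X → X) (f : X → ℝ≥0∞) (N : ℕ) (ω : X) : ℝ≥0∞ :=
  (∑ y ∈ latticeCube 0 N, f (τ y ω)) / (latticeCube (0 : Zd d) N).card

lemma lt_cubeAverage_iff {X : Type*} {τ : Zd d → X → X} {f : X → ℝ≥0∞} {N : ℕ} {ω : X}
    {t : ℝ≥0∞} :
    t < cubeAverage τ f N ω ↔
      t * (latticeCube (0 : Zd d) N).card < ∑ y ∈ latticeCube 0 N, f (τ y ω) :=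
  ENNReal.lt_div_iff_mul_lt (.inl (mod_cast (card_latticeCube_pos 0 N).ne'))
    (.inl (ENNReal.natCast_ne_top _))

lemma mul_sum_indicator_accumulate_le {X : Type*} {τ : Zd d → X → X}
    (hτadd : ∀ x y, τ (x + y) = τ x ∘ τ y) (f : X → ℝ≥0∞) (t : ℝ≥0∞) (R : ℕ) (ω : X) :
    t * ∑ x ∈ latticeCube 0 R,
        (accumulate (fun N ↦ {ω | t < cubeAverage τ f N ω}) R).indicator 1 (τ x ω) ≤
      4 ^ d * ∑ y ∈ latticeCube 0 (2 * R), f (τ y ω) := by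
  set E := accumulate (fun N ↦ {ω | t < cubeAverage τ f N ω}) R
  have hE (x : Zd d) (hx : τ x ω ∈ E) :
      ∃ N ≤ R, t * (latticeCube x N).card ≤ ∑ y ∈ latticeCube x N, f (τ y ω) := by
    obtain ⟨N, hNR, hN⟩ := mem_accumulate.1 hx
    refine ⟨N, hNR, ?_⟩
    have hsum := (lt_cubeAverage_iff.1 hN).le
    simp only [← Function.comp_apply (f := τ _) (g := τ x), ← hτadd] at hsum
    rwa [sum_latticeCube_zero_add (fun y ↦ f (τ y ω)), card_latticeCube, ← card_latticeCube x]
      at hsum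
  choose! r hrR hr using hE
  have hcount : ∑ x ∈ latticeCube 0 R, E.indicator (1 : X → ℝ≥0∞) (τ x ω) =
      ((latticeCube 0 R).filter (τ · ω ∈ E)).card := by
    simp [indicator_apply]
  rw [hcount]
  refine mul_card_le_of_forall_mul_card_le_sum (r := r) (fun x hx y hy ↦ ?_)
    fun x hx ↦ hr x (Finset.mem_filter.1 hx).2
  obtain ⟨hx, hxE⟩ := Finset.mem_filter.1 hx
  rw [mem_latticeCube] at hx hy ⊢
  have hrx : (r x : ℝ) ≤ R := mod_cast hrR x hxE
  push_cast
  linarith [dist_triangle y x 0]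

section MaximalInequality

variable {P : Measure Ω} {τ : Zd d → Ω → Ω}

lemma measurable_cubeAverage (hτ : ∀ z, Measurable (τ z)) {f : Ω → ℝ≥0∞} (hf : Measurable f)
    (N : ℕ) : Measurable (cubeAverage τ f N) :=
  (Finset.measurable_sum _ fun y _ ↦ hf.comp (hτ y)).div_const _

lemma lintegral_const_mul_sum_comp {ι : Type*} {σ : ι → Ω → Ω}
    (hσ : ∀ i, MeasurePreserving (σ i) P P) {f : Ω → ℝ≥0∞} (hf : Measurable f) (a : ℝ≥0∞)
    (S : Finset ι) :
    ∫⁻ ω, a * ∑ i ∈ S, f (σ i ω) ∂P = a * (S.card * ∫⁻ ω, f ω ∂P) := by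
  have hcomp (i : ι) : Measurable fun ω ↦ f (σ i ω) := hf.comp (hσ i).measurable
  rw [lintegral_const_mul _ (Finset.measurable_sum _ fun i _ ↦ hcomp i),
    lintegral_finsetSum _ fun i _ ↦ hcomp i]
  simp [(hσ _).lintegral_comp hf]

lemma mul_measure_accumulate_le (hτadd : ∀ x y, τ (x + y) = τ x ∘ τ y)
    (hτmp : ∀ z, MeasurePreserving (τ z) P P) {f : Ω → ℝ≥0∞} (hf : Measurable f) (t : ℝ≥0∞)
    (R : ℕ) :
    t * P (accumulate (fun N ↦ {ω | t < cubeAverage τ f N ω}) R) ≤ 8 ^ d * ∫⁻ ω, f ω ∂P := by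
  have hdouble : ((latticeCube (0 : Zd d) (2 * R)).card : ℝ≥0∞) ≤
      2 ^ d * (latticeCube (0 : Zd d) R).card :=
    mod_cast card_latticeCube_mul_le two_pos (0 : Zd d) 0 R
  set E := accumulate (fun N ↦ {ω | t < cubeAverage τ f N ω}) R
  set c := ((latticeCube (0 : Zd d) R).card : ℝ≥0∞)
  have hE : MeasurableSet E := .biUnion (to_countable _) fun N _ ↦ measurableSet_lt
    measurable_const (measurable_cubeAverage (fun z ↦ (hτmp z).measurable) hf N)
  have hmul : c * (t * P E) ≤ c * (8 ^ d * ∫⁻ ω, f ω ∂P) := by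
    calc c * (t * P E)
        = ∫⁻ ω, t * ∑ x ∈ latticeCube 0 R, E.indicator 1 (τ x ω) ∂P := by
          rw [lintegral_const_mul_sum_comp hτmp (measurable_one.indicator hE),
            lintegral_indicator_one hE, mul_left_comm]
      _ ≤ ∫⁻ ω, 4 ^ d * ∑ y ∈ latticeCube 0 (2 * R), f (τ y ω) ∂P :=
          lintegral_mono (mul_sum_indicator_accumulate_le hτadd f t R)
      _ = 4 ^ d * ((latticeCube (0 : Zd d) (2 * R)).card * ∫⁻ ω, f ω ∂P) :=
          lintegral_const_mul_sum_comp hτmp hf _ _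
      _ ≤ 4 ^ d * (2 ^ d * c * ∫⁻ ω, f ω ∂P) := by gcongr
      _ = c * (8 ^ d * ∫⁻ ω, f ω ∂P) := by
          rw [show (8 : ℝ≥0∞) = 4 * 2 by norm_num, mul_pow]
          ring
  exact (ENNReal.mul_le_mul_iff_right (mod_cast (card_latticeCube_pos 0 R).ne')
    (ENNReal.natCast_ne_top _)).1 hmul

/-- Wiener's maximal inequality for a measure-preserving action of `ℤ^d`. -/
theorem mul_measure_lt_iSup_cubeAverage_le (hτadd : ∀ x y, τ (x + y) = τ x ∘ τ y)
    (hτmp : ∀ z, MeasurePreserving (τ z) P P) {f : Ω → ℝ≥0∞} (hf : Measurable f) (t : ℝ≥0∞) :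
    t * P {ω | t < ⨆ N, cubeAverage τ f N ω} ≤ 8 ^ d * ∫⁻ ω, f ω ∂P := by
  simp only [lt_iSup_iff, ofPred_exists]
  rw [measure_iUnion_eq_iSup_accumulate, ENNReal.mul_iSup]
  exact iSup_le (mul_measure_accumulate_le hτadd hτmp hf t)

end MaximalInequality

/-- The part of `x` above the level `M`, i.e. `x` if `x > M` and `0` otherwise. -/
def tail (M x : ℝ≥0∞) : ℝ≥0∞ := (Ioi M).indicator id x

lemma tail_of_lt {M x : ℝ≥0∞} (h : M < x) : tail M x = x := indicator_of_mem (mem_Ioi.2 h) _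

lemma tail_of_le {M x : ℝ≥0∞} (h : x ≤ M) : tail M x = 0 := indicator_of_notMem (notMem_Ioi.2 h) _

lemma tail_le (M x : ℝ≥0∞) : tail M x ≤ x := indicator_le_self _ _ _

lemma measurable_tail (M : ℝ≥0∞) : Measurable (tail M) := measurable_id.indicator measurableSet_Ioi

lemma tendsto_lintegral_tail {P : Measure Ω} {g : Ω → ℝ≥0∞} (hg : Measurable g)
    (hint : ∫⁻ ω, g ω ∂P ≠ ⊤) :
    Tendsto (fun M : ℕ ↦ ∫⁻ ω, tail M (g ω) ∂P) atTop (𝓝 0) := by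
  rw [← lintegral_zero (μ := P)]
  refine tendsto_lintegral_of_dominated_convergence g (fun M ↦ (measurable_tail M).comp hg)
    (fun M ↦ .of_forall fun ω ↦ tail_le _ _) hint ?_
  filter_upwards [ae_lt_top hg hint] with ω hω
  obtain ⟨M₀, hM₀⟩ := ENNReal.exists_nat_gt hω.ne
  refine tendsto_const_nhds.congr' ?_
  filter_upwards [eventually_ge_atTop M₀] with M hM
  exact (tail_of_le (hM₀.le.trans (mod_cast hM))).symm

section Averages

variable {P : Measure Ω} {τ : Zd d → Ω → Ω}

lemma ae_exists_cubeAverage_tail_le (hτadd : ∀ x y, τ (x + y) = τ x ∘ τ y)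
    (hτmp : ∀ z, MeasurePreserving (τ z) P P) {g : Ω → ℝ≥0∞} (hg : Measurable g)
    (hint : ∫⁻ ω, g ω ∂P ≠ ⊤) {θ : ℝ≥0∞} (hθ : θ ≠ 0) :
    ∀ᵐ ω ∂P, ∃ M : ℕ, ∀ N, cubeAverage τ (fun ω ↦ tail M (g ω)) N ω ≤ θ := by
  set B := {ω | ¬∃ M : ℕ, ∀ N, cubeAverage τ (fun ω ↦ tail M (g ω)) N ω ≤ θ}
  have hbound (M : ℕ) : θ * P B ≤ 8 ^ d * ∫⁻ ω, tail M (g ω) ∂P := by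
    refine le_trans ?_
      (mul_measure_lt_iSup_cubeAverage_le hτadd hτmp ((measurable_tail M).comp hg) θ)
    gcongr
    intro ω hω
    simp only [B, mem_ofPred_eq, not_exists, not_forall, not_le] at hω
    exact lt_iSup_iff.2 (hω M)
  have hlim : Tendsto (fun M : ℕ ↦ (8 : ℝ≥0∞) ^ d * ∫⁻ ω, tail M (g ω) ∂P) atTop (𝓝 0) := by
    simpa using ENNReal.Tendsto.const_mul (tendsto_lintegral_tail hg hint)
      (.inr (ENNReal.pow_ne_top (by norm_num : (8 : ℝ≥0∞) ≠ ⊤)))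
  have hzero : θ * P B = 0 := le_antisymm (ge_of_tendsto' hlim hbound) zero_le
  exact (mul_eq_zero.1 hzero).resolve_left hθ

lemma ae_forall_exists_cubeAverage_tail_le (hτadd : ∀ x y, τ (x + y) = τ x ∘ τ y)
    (hτmp : ∀ z, MeasurePreserving (τ z) P P) {g : Ω → ℝ≥0∞} (hg : Measurable g)
    (hint : ∫⁻ ω, g ω ∂P ≠ ⊤) :
    ∀ᵐ ω ∂P, ∀ θ ≠ 0, ∃ M : ℕ, ∀ N, cubeAverage τ (fun ω ↦ tail M (g ω)) N ω ≤ θ := by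
  have hinv (m : ℕ) := ae_exists_cubeAverage_tail_le hτadd hτmp hg hint
    (ENNReal.inv_ne_zero.2 (ENNReal.natCast_ne_top m))
  filter_upwards [ae_all_iff.2 hinv] with ω hω θ hθ
  obtain ⟨m, hm⟩ := ENNReal.exists_inv_nat_lt hθ
  obtain ⟨M, hM⟩ := hω m
  exact ⟨M, fun N ↦ (hM N).trans hm.le⟩

end Averages

/-- The difference quotient `∂_b^ε u (z)`, with `u` indexed by `ℤ^d` as in `energyE`. -/
def diffQuot (ε : ℝ) (u : Zd d → Rn n) (b z : Zd d) : Rn n :=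
  (ε * ‖toRd b‖)⁻¹ • (u (z + b) - u z)

/-- The truncated gradient sum
`ε^d ∑_{z ∈ εℤ^d ∩ A} ∑_{b ∈ 𝒩₀, |∂_b^ε u (z)| ≥ k} |∂_b^ε u (z)|`. -/
def steepSlopeSum (ε k : ℝ) (u : Zd d → Rn n) (A : Set (Rd d)) : ℝ :=
  ε ^ d * ∑' z : Zd d, if ε • toRd z ∈ A then
    ∑ i : Fin d, if k ≤ ‖diffQuot ε u (stdb i) z‖ then ‖diffQuot ε u (stdb i) z‖ else 0 else 0

lemma stdb_injective : Function.Injective (stdb : Fin d → Zd d) := fun i j hij ↦ by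
  simpa [stdb] using congrFun hij i

lemma sum_stdb_le_sum {E0 : Finset (Zd d)} (hE0b : ∀ i, stdb i ∈ E0) {f : Zd d → ℝ}
    (hf : ∀ b ∈ E0, 0 ≤ f b) : ∑ i, f (stdb i) ≤ ∑ b ∈ E0, f b := by
  rw [← Finset.sum_image (f := f) stdb_injective.injOn]
  refine Finset.sum_le_sum_of_subset_of_nonneg ?_ fun b hb _ ↦ hf b hb
  simpa [Finset.image_subset_iff] using hE0b

lemma mem_latticeCube_of_smul_mem_closedBall {ε R : ℝ} (hε : 0 < ε) {z : Zd d}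
    (hz : ε • toRd z ∈ closedBall 0 R) : z ∈ latticeCube 0 ⌊R / ε⌋₊ := by
  rw [mem_closedBall_zero_iff] at hz
  refine mem_latticeCube.2 ((dist_pi_le_iff (Nat.cast_nonneg _)).2 fun i ↦ ?_)
  have hcoord : ε * |(z i : ℝ)| ≤ R := by
    simpa [toRd, abs_of_pos hε] using (PiLp.norm_apply_le (ε • toRd z) i).trans hz
  have hnat : (z i).natAbs ≤ ⌊R / ε⌋₊ := Nat.le_floor <| by
    rwa [Nat.cast_natAbs, Int.cast_abs, le_div_iff₀' hε]
  simpa [Int.norm_eq_abs, Nat.cast_natAbs] using (Nat.cast_le (α := ℝ)).2 hnat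

lemma pow_mul_card_latticeCube_le {ε R : ℝ} (hε : 0 < ε) (hε1 : ε ≤ 1) (hR : 0 ≤ R)
    (x : Zd d) : ε ^ d * (latticeCube x ⌊R / ε⌋₊).card ≤ (2 * R + 1) ^ d := by
  have hside : ε * (2 * ⌊R / ε⌋₊ + 1) ≤ 2 * R + 1 := by
    have hfloor : ε * ⌊R / ε⌋₊ ≤ R := (le_div_iff₀' hε).1 (Nat.floor_le (by positivity))
    linarith
  rw [card_latticeCube]
  push_cast
  rw [← mul_pow]
  gcongr

lemma ofReal_pow_mul_sum_le {X : Type*} {τ : Zd d → X → X} {f : X → ℝ≥0∞} {ω : X} {θ : ℝ≥0∞}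
    (hθ : ∀ N, cubeAverage τ f N ω ≤ θ) {ε R : ℝ} (hε : 0 < ε) (hε1 : ε ≤ 1) (hR : 0 ≤ R) :
    ENNReal.ofReal (ε ^ d) * ∑ z ∈ latticeCube 0 ⌊R / ε⌋₊, f (τ z ω) ≤
      ENNReal.ofReal ((2 * R + 1) ^ d) * θ := by
  set N := ⌊R / ε⌋₊
  have hsum : ∑ z ∈ latticeCube 0 N, f (τ z ω) ≤ (latticeCube (0 : Zd d) N).card * θ := by
    rw [mul_comm, ← not_lt, ← lt_cubeAverage_iff, not_lt]
    exact hθ N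
  calc ENNReal.ofReal (ε ^ d) * ∑ z ∈ latticeCube 0 N, f (τ z ω)
      ≤ ENNReal.ofReal (ε ^ d) * ((latticeCube (0 : Zd d) N).card * θ) := by gcongr
    _ = ENNReal.ofReal (ε ^ d * (latticeCube (0 : Zd d) N).card) * θ := by
        rw [ENNReal.ofReal_mul (by positivity), ENNReal.ofReal_natCast, mul_assoc]
    _ ≤ ENNReal.ofReal ((2 * R + 1) ^ d) * θ := by
        gcongr
        exact pow_mul_card_latticeCube_le hε hε1 hR 0

lemma le_mul_rpow_or_lt_rpow {p s r : ℝ} (hp : 1 < p) (hs : 0 < s) (hr : 0 < r) :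
    r ≤ s * r ^ p ∨ r < s ^ (-(1 / (p - 1))) := by
  refine or_iff_not_imp_right.2 fun hsr ↦ ?_
  have hinv : s⁻¹ ≤ r ^ (p - 1) := calc
    s⁻¹ = (s ^ (-(1 / (p - 1)))) ^ (p - 1) := by
      rw [← Real.rpow_mul hs.le, neg_mul, one_div_mul_cancel (by linarith), Real.rpow_neg_one]
    _ ≤ r ^ (p - 1) :=
      Real.rpow_le_rpow (by positivity) (not_lt.1 hsr) (by linarith)
  calc r = s * (s⁻¹ * r) := by field_simp
    _ ≤ s * (r ^ (p - 1) * r) := by gcongr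
    _ = s * r ^ p := by rw [Real.rpow_sub_one hr.ne', div_mul_cancel₀ _ hr.ne']

lemma mul_rpow_le_of_mul_rpow_sub_le {p c₁ k l r v : ℝ} (hp : 0 ≤ p) (hc₁ : 0 < c₁) (hk : 0 ≤ k)
    (hkp : 2 * c₁ ^ 2 ≤ k ^ p) (hkr : k ≤ r) (hl : 0 ≤ l) (hv : l * (r ^ p / c₁ - c₁) ≤ v) :
    l * r ^ p ≤ 2 * c₁ * v := by
  have hrp : 2 * c₁ ^ 2 ≤ r ^ p := hkp.trans (by gcongr)
  have hhalf : r ^ p / (2 * c₁) ≤ r ^ p / c₁ - c₁ := by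
    field_simp
    linarith
  have hlv : l * (r ^ p / (2 * c₁)) ≤ v := (by gcongr : _ ≤ _).trans hv
  rwa [← mul_div_assoc, div_le_iff₀' (by positivity)] at hlv

/-- For `l ≤ 0` the right-hand side is infinite, since `ENNReal.ofReal l ^ (-1/(p-1)) = ⊤`. -/
lemma ofReal_ite_le_add_tail {p c₁ η k l r v : ℝ} {M : ℝ≥0∞} (hp : 1 < p) (hc₁ : 0 < c₁)
    (hη : 0 < η) (hk : 0 < k) (hkp : 2 * c₁ ^ 2 ≤ k ^ p)
    (hM : M ≤ ENNReal.ofReal (k * η ^ (1 / (p - 1)))) (hv : l * (r ^ p / c₁ - c₁) ≤ v) :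
    ENNReal.ofReal (if k ≤ r then r else 0) ≤ ENNReal.ofReal (2 * c₁ * η * v) +
      ENNReal.ofReal (η ^ (-(1 / (p - 1)))) *
        tail M (ENNReal.ofReal l ^ (-(1 / (p - 1)))) := by
  have hβ : 0 < 1 / (p - 1) := one_div_pos.2 (by linarith)
  set β := 1 / (p - 1)
  split_ifs with hkr
  swap
  · simp
  have hr : 0 < r := hk.trans_le hkr
  rcases le_or_gt l 0 with hl | hl
  · rw [ENNReal.ofReal_of_nonpos hl, ENNReal.zero_rpow_of_neg (neg_neg_of_pos hβ),
      tail_of_lt (hM.trans_lt ENNReal.ofReal_lt_top),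
      ENNReal.mul_top (ENNReal.ofReal_pos.2 (by positivity)).ne', add_top]
    exact le_top
  rcases le_mul_rpow_or_lt_rpow hp (mul_pos hη hl) hr with henergy | hweight
  · have hcoercive : l * r ^ p ≤ 2 * c₁ * v :=
      mul_rpow_le_of_mul_rpow_sub_le (by linarith) hc₁ hk.le hkp hkr hl.le hv
    refine le_add_right (ENNReal.ofReal_le_ofReal ?_)
    calc r ≤ η * (l * r ^ p) := by rwa [← mul_assoc]
      _ ≤ η * (2 * c₁ * v) := by gcongr
      _ = 2 * c₁ * η * v := by ring
  · rw [Real.mul_rpow hη.le hl.le] at hweight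
    have hlevel : k * η ^ β < l ^ (-β) := by
      rw [Real.rpow_neg hη.le, ← div_eq_inv_mul, lt_div_iff₀ (by positivity)] at hweight
      exact (by gcongr : k * η ^ β ≤ r * η ^ β).trans_lt hweight
    rw [ENNReal.ofReal_rpow_of_pos hl, tail_of_lt (hM.trans_lt
      ((ENNReal.ofReal_lt_ofReal_iff (by positivity)).2 hlevel)),
      ← ENNReal.ofReal_mul (by positivity)]
    exact le_add_left (ENNReal.ofReal_le_ofReal hweight.le)

lemma ofReal_sum_ite_le_add_sum_tail {ι : Type*} {s : Finset ι} {p c₁ η k : ℝ} {l r v : ι → ℝ}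
    {M : ι → ℝ≥0∞} (hp : 1 < p) (hc₁ : 0 < c₁) (hη : 0 < η) (hk : 0 < k)
    (hkp : 2 * c₁ ^ 2 ≤ k ^ p) (hM : ∀ i, M i ≤ ENNReal.ofReal (k * η ^ (1 / (p - 1))))
    (hv0 : ∀ i, 0 ≤ v i) (hv : ∀ i, l i * (r i ^ p / c₁ - c₁) ≤ v i) :
    ENNReal.ofReal (∑ i ∈ s, if k ≤ r i then r i else 0) ≤
      ENNReal.ofReal (2 * c₁ * η * ∑ i ∈ s, v i) +
        ENNReal.ofReal (η ^ (-(1 / (p - 1)))) *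
          ∑ i ∈ s, tail (M i) (ENNReal.ofReal (l i) ^ (-(1 / (p - 1)))) := by
  have hr (i : ι) : 0 ≤ if k ≤ r i then r i else 0 := by
    split_ifs with h
    exacts [hk.le.trans h, le_rfl]
  have hv0' (i : ι) : 0 ≤ 2 * c₁ * η * v i := mul_nonneg (by positivity) (hv0 i)
  rw [ENNReal.ofReal_sum_of_nonneg fun i _ ↦ hr i, Finset.mul_sum, Finset.mul_sum,
    ENNReal.ofReal_sum_of_nonneg fun i _ ↦ hv0' i, ← Finset.sum_add_distrib]
  exact Finset.sum_le_sum fun i _ ↦ ofReal_ite_le_add_tail hp hc₁ hη hk hkp (hM i) (hv i)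

section Deterministic

variable {X : Type*} {τ : Zd d → X → X} {E0 : Finset (Zd d)} {V : Zd d → X → Rn n → ℝ}
  {lam : Fin d → X → ℝ} {p c₁ : ℝ} {ω : X} {A : Set (Rd d)}

lemma ofReal_steepSlopeSum_le (hE0b : ∀ i, stdb i ∈ E0) (hp : 1 < p) (hc₁ : 0 < c₁)
    (hVnn : ∀ b ∈ E0, ∀ ω r, 0 ≤ V b ω r)
    (hgrowth : ∀ i ω r, lam i ω * (‖r‖ ^ p / c₁ - c₁) ≤ V (stdb i) ω r)
    {ε η k : ℝ} (hε : 0 < ε) (hη : 0 < η) (hk : 0 < k) (hkp : 2 * c₁ ^ 2 ≤ k ^ p)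
    {M : Fin d → ℝ≥0∞} (hM : ∀ i, M i ≤ ENNReal.ofReal (k * η ^ (1 / (p - 1))))
    {S : Finset (Zd d)} (hS : ∀ z, ε • toRd z ∈ A → z ∈ S) (u : Zd d → Rn n) :
    ENNReal.ofReal (steepSlopeSum ε k u A) ≤
      ENNReal.ofReal (2 * c₁ * η * energyE τ E0 V ε ω u A) +
        ENNReal.ofReal (η ^ (-(1 / (p - 1)))) * ∑ i, ENNReal.ofReal (ε ^ d) *
          ∑ z ∈ S, tail (M i) (ENNReal.ofReal (lam i (τ z ω)) ^ (-(1 / (p - 1)))) := by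
  set β := 1 / (p - 1)
  set D := diffQuot ε u
  set T := S.filter (ε • toRd · ∈ A)
  set w := fun i z ↦ tail (M i) (ENNReal.ofReal (lam i (τ z ω)) ^ (-β))
  have htsum (F : Zd d → ℝ) : ∑' z, (if ε • toRd z ∈ A then F z else 0) = ∑ z ∈ T, F z := by
    rw [tsum_eq_sum (s := S) fun z hz ↦ if_neg fun hzA ↦ hz (hS z hzA), Finset.sum_filter]
  have hsteep : steepSlopeSum ε k u A =
      ε ^ d * ∑ q ∈ T ×ˢ Finset.univ, if k ≤ ‖D (stdb q.2) q.1‖ then ‖D (stdb q.2) q.1‖ else 0 := by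
    rw [steepSlopeSum, htsum, Finset.sum_product]
  have henergy : ε ^ d * ∑ q ∈ T ×ˢ Finset.univ, V (stdb q.2) (τ q.1 ω) (D (stdb q.2) q.1) ≤
      energyE τ E0 V ε ω u A := by
    rw [energyE, htsum, Finset.sum_product]
    gcongr with z
    exact sum_stdb_le_sum (f := fun b ↦ V b (τ z ω) (D b z)) hE0b fun b hb ↦ hVnn b hb _ _
  have hweight : ∑ q ∈ T ×ˢ Finset.univ, w q.2 q.1 ≤ ∑ i, ∑ z ∈ S, w i z := by
    rw [Finset.sum_product_right]
    gcongr
    exact Finset.filter_subset _ _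
  have hsum := ofReal_sum_ite_le_add_sum_tail (s := T ×ˢ Finset.univ) hp hc₁ hη hk hkp
    (fun q ↦ hM q.2) (fun q ↦ hVnn _ (hE0b q.2) (τ q.1 ω) (D (stdb q.2) q.1))
    fun q ↦ hgrowth q.2 (τ q.1 ω) (D (stdb q.2) q.1)
  calc ENNReal.ofReal (steepSlopeSum ε k u A)
      ≤ ENNReal.ofReal (ε ^ d) * (ENNReal.ofReal (2 * c₁ * η * ∑ q ∈ T ×ˢ Finset.univ,
          V (stdb q.2) (τ q.1 ω) (D (stdb q.2) q.1)) +
            ENNReal.ofReal (η ^ (-β)) * ∑ q ∈ T ×ˢ Finset.univ, w q.2 q.1) := by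
        rw [hsteep, ENNReal.ofReal_mul (by positivity)]
        gcongr
    _ = ENNReal.ofReal (2 * c₁ * η * (ε ^ d * ∑ q ∈ T ×ˢ Finset.univ,
          V (stdb q.2) (τ q.1 ω) (D (stdb q.2) q.1))) +
            ENNReal.ofReal (η ^ (-β)) *
              (ENNReal.ofReal (ε ^ d) * ∑ q ∈ T ×ˢ Finset.univ, w q.2 q.1) := by
        rw [mul_add, ← ENNReal.ofReal_mul (by positivity), mul_left_comm (ε ^ d),
          mul_left_comm (ENNReal.ofReal (ε ^ d))]
    _ ≤ ENNReal.ofReal (2 * c₁ * η * energyE τ E0 V ε ω u A) +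
          ENNReal.ofReal (η ^ (-β)) * ∑ i, ENNReal.ofReal (ε ^ d) * ∑ z ∈ S, w i z := by
        rw [← Finset.mul_sum]
        gcongr

lemma ofReal_steepSlopeSum_le_of_cubeAverage_le (hE0b : ∀ i, stdb i ∈ E0) (hp : 1 < p)
    (hc₁ : 0 < c₁) (hVnn : ∀ b ∈ E0, ∀ ω r, 0 ≤ V b ω r)
    (hgrowth : ∀ i ω r, lam i ω * (‖r‖ ^ p / c₁ - c₁) ≤ V (stdb i) ω r)
    {ε η k R : ℝ} (hε : 0 < ε) (hε1 : ε ≤ 1) (hη : 0 < η) (hk : 0 < k)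
    (hkp : 2 * c₁ ^ 2 ≤ k ^ p) (hR : 0 ≤ R) (hAR : A ⊆ closedBall 0 R)
    {M : Fin d → ℝ≥0∞} (hM : ∀ i, M i ≤ ENNReal.ofReal (k * η ^ (1 / (p - 1)))) {θ : ℝ≥0∞}
    (hθ : ∀ i N, cubeAverage τ
      (fun ω ↦ tail (M i) (ENNReal.ofReal (lam i ω) ^ (-(1 / (p - 1))))) N ω ≤ θ)
    (u : Zd d → Rn n) :
    ENNReal.ofReal (steepSlopeSum ε k u A) ≤
      ENNReal.ofReal (2 * c₁ * η * energyE τ E0 V ε ω u A) +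
        θ * (ENNReal.ofReal (η ^ (-(1 / (p - 1)))) * (d * ENNReal.ofReal ((2 * R + 1) ^ d))) := by
  refine (ofReal_steepSlopeSum_le (τ := τ) (ω := ω) hE0b hp hc₁ hVnn hgrowth hε hη hk hkp hM
    (fun z hz ↦ mem_latticeCube_of_smul_mem_closedBall hε (hAR hz)) u).trans ?_
  refine add_le_add_right ?_ _
  calc _ ≤ ENNReal.ofReal (η ^ (-(1 / (p - 1)))) *
          ∑ _i : Fin d, ENNReal.ofReal ((2 * R + 1) ^ d) * θ :=
        mul_le_mul_right (Finset.sum_le_sum fun i _ ↦ ofReal_pow_mul_sum_le (hθ i) hε hε1 hR) _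
    _ = θ * (ENNReal.ofReal (η ^ (-(1 / (p - 1)))) *
          (d * ENNReal.ofReal ((2 * R + 1) ^ d))) := by
        rw [Finset.sum_const, Finset.card_fin, nsmul_eq_mul]
        ring

lemma exists_forall_eventually_steepSlopeSum_lt (hE0b : ∀ i, stdb i ∈ E0) (hp : 1 < p)
    (hc₁ : 0 < c₁) (hVnn : ∀ b ∈ E0, ∀ ω r, 0 ≤ V b ω r)
    (hgrowth : ∀ i ω r, lam i ω * (‖r‖ ^ p / c₁ - c₁) ≤ V (stdb i) ω r)
    (htail : ∀ i, ∀ θ ≠ 0, ∃ M : ℕ, ∀ N,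
      cubeAverage τ (fun ω ↦ tail M (ENNReal.ofReal (lam i ω) ^ (-(1 / (p - 1))))) N ω ≤ θ)
    (hA : Bornology.IsBounded A) {uε : ℝ → Zd d → Rn n}
    (hbdd : IsBoundedUnder (· ≤ ·) (𝓝[>] (0 : ℝ)) fun ε ↦ energyE τ E0 V ε ω (uε ε) A)
    {δ : ℝ} (hδ : 0 < δ) :
    ∃ K : ℕ, ∀ k : ℕ, K ≤ k → ∀ᶠ ε in 𝓝[>] (0 : ℝ), steepSlopeSum ε k (uε ε) A < δ := by
  obtain ⟨C, hC⟩ := hbdd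
  obtain ⟨R, hR, hAR⟩ := hA.subset_closedBall_lt 0 0
  obtain ⟨η, hη, hηC⟩ := exists_pos_mul_lt (half_pos hδ) (2 * c₁ * C)
  have hfinite : ENNReal.ofReal (η ^ (-(1 / (p - 1)))) *
      (d * ENNReal.ofReal ((2 * R + 1) ^ d)) ≠ ⊤ := by finiteness
  obtain ⟨θ, hθ, hθδ⟩ := ENNReal.exists_nnreal_pos_mul_lt hfinite
    (ENNReal.ofReal_pos.2 (half_pos hδ)).ne'
  choose M hM using fun i ↦ htail i θ (mod_cast hθ.ne')
  have hcoercive : ∀ᶠ k : ℕ in atTop, 2 * c₁ ^ 2 ≤ (k : ℝ) ^ p :=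
    ((tendsto_rpow_atTop (by linarith)).comp tendsto_natCast_atTop_atTop).eventually_ge_atTop _
  have hlevel : ∀ᶠ k : ℕ in atTop, ∀ i, (M i : ℝ) ≤ k * η ^ (1 / (p - 1)) :=
    eventually_all.2 fun i ↦ (tendsto_natCast_atTop_atTop.atTop_mul_const
      (Real.rpow_pos_of_pos hη _)).eventually_ge_atTop _
  obtain ⟨K, hK⟩ := eventually_atTop.1 (hcoercive.and (hlevel.and (eventually_gt_atTop 0)))
  refine ⟨K, fun k hk ↦ ?_⟩
  obtain ⟨hkp, hkM, hk0⟩ := hK k hk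
  have hkM' (i : Fin d) : (M i : ℝ≥0∞) ≤ ENNReal.ofReal (k * η ^ (1 / (p - 1))) := by
    rw [← ENNReal.ofReal_natCast]
    exact ENNReal.ofReal_le_ofReal (hkM i)
  filter_upwards [hC, Ioo_mem_nhdsGT one_pos] with ε hεC ⟨hε, hε1⟩
  have henergy : 2 * c₁ * η * energyE τ E0 V ε ω (uε ε) A < δ / 2 := calc
    _ ≤ 2 * c₁ * η * C := by gcongr; exact hεC
    _ = 2 * c₁ * C * η := by ring
    _ < δ / 2 := hηC
  rw [← ENNReal.ofReal_lt_ofReal_iff hδ, ← add_halves δ,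
    ENNReal.ofReal_add (half_pos hδ).le (half_pos hδ).le]
  exact (ofReal_steepSlopeSum_le_of_cubeAverage_le hE0b hp hc₁ hVnn hgrowth hε hε1.le hη
    (mod_cast hk0) hkp hR.le hAR hkM' hM (uε ε)).trans_lt
    (ENNReal.add_lt_add ((ENNReal.ofReal_lt_ofReal_iff (half_pos hδ)).2 henergy) hθδ)

end Deterministic

lemma isBounded_halfBox (a b : Fin d → ℝ) : Bornology.IsBounded (halfBox a b) := by
  refine ((EuclideanSpace.equiv (Fin d) ℝ).symm.lipschitz.isBounded_image
    (isBounded_Icc a b)).subset fun x hx ↦ ?_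
  exact ⟨x, ⟨fun i ↦ (hx i).1, fun i ↦ (hx i).2.le⟩, rfl⟩

theorem equi_integrability_general {P : Measure Ω} {τ : Zd d → Ω → Ω}
    (hτadd : ∀ x y, τ (x + y) = τ x ∘ τ y) (hτmp : ∀ z, MeasurePreserving (τ z) P P)
    {E0 : Finset (Zd d)} (hE0b : ∀ i, stdb i ∈ E0) {p c₁ : ℝ} (hp : 1 < p) (hc₁ : 0 < c₁)
    {V : Zd d → Ω → Rn n → ℝ} (hVnn : ∀ b ∈ E0, ∀ ω r, 0 ≤ V b ω r)
    {lam : Fin d → Ω → ℝ} (hlammeas : ∀ i, Measurable (lam i))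
    (hgrowth : ∀ i ω r, lam i ω * (‖r‖ ^ p / c₁ - c₁) ≤ V (stdb i) ω r)
    (hmom : ∀ i, ∫⁻ ω, ENNReal.ofReal (lam i ω) ^ (-(1 / (p - 1))) ∂P ≠ ⊤) :
    ∀ᵐ ω ∂P, ∀ A, Bornology.IsBounded A → ∀ uε : ℝ → Zd d → Rn n,
      IsBoundedUnder (· ≤ ·) (𝓝[>] (0 : ℝ)) (fun ε ↦ energyE τ E0 V ε ω (uε ε) A) →
      ∀ δ : ℝ, 0 < δ → ∃ K : ℕ, ∀ k : ℕ, K ≤ k →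
        ∀ᶠ ε in 𝓝[>] (0 : ℝ), steepSlopeSum ε k (uε ε) A < δ := by
  have htail := ae_all_iff.2 fun i ↦ ae_forall_exists_cubeAverage_tail_le hτadd hτmp
    ((hlammeas i).ennreal_ofReal.pow_const _) (hmom i)
  filter_upwards [htail] with ω hω A hA uε hbdd δ hδ
  exact exists_forall_eventually_steepSlopeSum_lt hE0b hp hc₁ hVnn hgrowth hω hA hbdd hδ


/-- discrete equi-integrability of gradients in the critical case
`β = 1/(p-1)`, Step 2 of the proof of Lemma 3.6. The double limit
`lim_k limsup_ε (...) = 0` of the nonnegative truncated sums is phrased in the robust form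
"for every `δ > 0` there is `K` such that for all `k ≥ K` eventually the sum is `< δ`". -/
theorem equi_integrability
    {d n : ℕ} (hd : 2 ≤ d) (hn : 1 ≤ n)
    {Ω : Type*} [MeasurableSpace Ω] (P : Measure Ω) [IsProbabilityMeasure P]
    (τ : Zd d → Ω → Ω) (hτ0 : τ 0 = id)
    (hτadd : ∀ x y : Zd d, τ (x + y) = τ x ∘ τ y)
    (hτmp : ∀ z : Zd d, MeasurePreserving (τ z) P P)
    (hτerg : ∀ B : Set Ω, MeasurableSet B → (∀ z : Zd d, τ z ⁻¹' B = B) → P B = 0 ∨ P B = 1)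
    (E0 : Finset (Zd d)) (hE00 : (0 : Zd d) ∉ E0) (hE0b : ∀ i : Fin d, stdb i ∈ E0)
    (p c₁ : ℝ) (hp : 1 < p) (hc₁ : 0 < c₁)
    (V : Zd d → Ω → Rn n → ℝ)
    (hVmeas : ∀ b ∈ E0, Measurable fun q : Ω × Rn n => V b q.1 q.2)
    (hVcont : ∀ b ∈ E0, ∀ ω : Ω, Continuous (V b ω))
    (hVnn : ∀ b ∈ E0, ∀ (ω : Ω) (r : Rn n), 0 ≤ V b ω r)
    (lam : Zd d → Ω → ℝ)
    (hlammeas : ∀ b ∈ E0, Measurable (lam b))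
    (hlamnn : ∀ b ∈ E0, ∀ ω : Ω, 0 ≤ lam b ω)
    (hgrowth : ∀ b ∈ E0, ∀ (ω : Ω) (r : Rn n),
      lam b ω * (‖r‖ ^ p / c₁ - c₁) ≤ V b ω r ∧ V b ω r ≤ c₁ * (1 + lam b ω * (‖r‖ ^ p + 1)))
    (α β : ℝ) (hα : 1 ≤ α) (hβ : 1 / (p - 1) ≤ β)
    (hmomα : ∀ b ∈ E0, ∫⁻ ω, ENNReal.ofReal (lam b ω ^ α) ∂P < ⊤)
    (hmomβ : ∀ i : Fin d, ∫⁻ ω, ENNReal.ofReal (lam (stdb i) ω) ^ (-β) ∂P < ⊤)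
    (hβcrit : β = 1 / (p - 1)) :
    ∃ Ω₀ : Set Ω, MeasurableSet Ω₀ ∧ P Ω₀ = 1 ∧
      ∀ ω ∈ Ω₀, ∀ a b : Fin d → ℝ, ∀ uε : ℝ → Zd d → Rn n,
        IsBoundedUnder (· ≤ ·) (𝓝[>] (0 : ℝ))
          (fun ε => energyE τ E0 V ε ω (uε ε) (halfBox a b)) →
        ∀ δ : ℝ, 0 < δ → ∃ K : ℕ, ∀ k : ℕ, K ≤ k →
          ∀ᶠ ε in 𝓝[>] (0 : ℝ),
            ε ^ d * ∑' z : Zd d,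
              (if ε • toRd z ∈ halfBox a b then
                ∑ i : Fin d,
                  (if (k : ℝ) ≤ ‖(ε * ‖toRd (stdb i)‖)⁻¹ • (uε ε (z + stdb i) - uε ε z)‖ then
                    ‖(ε * ‖toRd (stdb i)‖)⁻¹ • (uε ε (z + stdb i) - uε ε z)‖ else 0)
              else 0) < δ := by
  subst hβcrit
  obtain ⟨Ω₀, hΩ₀, hmeas, h⟩ := (equi_integrability_general hτadd hτmp hE0b hp hc₁ hVnn
    (fun i ↦ hlammeas _ (hE0b i)) (fun i ω r ↦ (hgrowth _ (hE0b i) ω r).1)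
    fun i ↦ (hmomβ i).ne).exists_measurable_mem
  exact ⟨Ω₀, hmeas, (mem_ae_iff_prob_eq_one hmeas).1 hΩ₀, fun ω hω a b ↦
    h ω hω _ (isBounded_halfBox a b)⟩

end StochHom
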